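/- Let f : X → Y be a map of simplicial sets, 𝒜 a complete abelian category with exact products, and T : Δ/Y ⥤ 𝒜 a covariant Gabriel–Zisman natural system on Y. Suppose f is locally cohomologically trivial, i.e. for every simplex y : Δ[n] → Y the canonical morphism H^q_GZ(Δ[n], T_{Δ[n]}) → H^q_GZ(F_y, (f^*T)_y), induced by the projection p : F_y → Δ[n] of the pullback square F_y = Δ[n] ×_Y X, is an isomorphism for all q ≥ 0. Then the canonical morphism induced by f, H^q_GZ(Y, T) → H^q_GZ(X, f^*T), is an isomorphism for all q ≥ 0. -/

import Mathlib

/-!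
STATEMENT 16: Let `f : X → Y` be a map of simplicial sets, `𝒜` a complete abelian
category with exact products, and `T : Δ/Y ⥤ 𝒜` a covariant Gabriel–Zisman natural
system.  If `f` is locally cohomologically trivial (for every simplex `y : Δ[n] → Y` the
canonical morphism `H^q_GZ(Δ[n], T_{Δ[n]}) → H^q_GZ(F_y, (f^*T)_y)` is an isomorphism for
all `q`), then the canonical morphism `H^q_GZ(Y, T) → H^q_GZ(X, f^*T)` is an isomorphism
for all `q`.  (The canonical morphisms are induced on cohomology by the cochain maps
`(a_σ) ↦ (a_{p∘g})` and `(a_σ) ↦ (a_{f∘x})` respectively, given by the functoriality of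
the Gabriel–Zisman cochain complex.)
-/
open CategoryTheory CategoryTheory.Limits Opposite
universe v u
namespace GZ

variable {𝒜 : Type u} [Category.{v} 𝒜] [HasLimits 𝒜]

/-- The simplex category `Δ/X` of a simplicial set `X`, realized as the opposite of
the category of elements of `X`. -/
abbrev SimplexCat (X : SSet.{v}) : Type v := X.Elementsᵒᵖ

/-- The object of `Δ/X` corresponding to a simplex `σ ∈ X_n`. -/
abbrev elt (X : SSet.{v}) {n : SimplexCategoryᵒᵖ} (σ : X.obj n) : SimplexCat X :=
  op (X.elementsMk n σ)

/-- The morphism of `Δ/X` from `X(θ)(σ)` to `σ` determined by `θ`. -/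
abbrev eltHom (X : SSet.{v}) {n m : SimplexCategoryᵒᵖ} (θ : n ⟶ m) (σ : X.obj n) :
    elt X (X.map θ σ) ⟶ elt X σ :=
  Quiver.Hom.op (CategoryOfElements.homMk (X.elementsMk n σ) (X.elementsMk m (X.map θ σ)) θ rfl)

/-- The projection functor `P_X : Δ/X ⥤ Δ`. -/
def proj (X : SSet.{v}) : SimplexCat X ⥤ SimplexCategory :=
  (CategoryOfElements.π X).leftOp

lemma rep_aux (X : SSet.{v}) (T : SimplexCat X ⥤ 𝒜) {u w : SimplexCategoryᵒᵖ}
    (g : u ⟶ w) (σ : X.obj u) (b : X.obj w) (h : X.map g σ = b) :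
    Pi.π (fun τ : X.obj w => T.obj (elt X τ)) b ≫
        T.map (Quiver.Hom.op (CategoryOfElements.homMk (X.elementsMk u σ) (X.elementsMk w b) g h)) =
      Pi.π (fun τ : X.obj w => T.obj (elt X τ)) (X.map g σ) ≫ T.map (eltHom X g σ) := by
  subst h; rfl

/-- The cosimplicial replacement `∏* T` of a Gabriel–Zisman natural system `T : Δ/X ⥤ 𝒜`. -/
@[simps!]
noncomputable def rep (X : SSet.{v}) (T : SimplexCat X ⥤ 𝒜) : CosimplicialObject 𝒜 where
  obj n := ∏ᶜ fun σ : X.obj (op n) => T.obj (elt X σ)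
  map {n m} θ := Pi.lift fun σ : X.obj (op m) =>
    Pi.π _ (X.map θ.op σ) ≫ T.map (eltHom X θ.op σ)
  map_id n := by
    ext σ
    simp only [limit.lift_π, Fan.mk_π_app, Category.id_comp, op_id]
    have h : X.map (𝟙 (op n)) σ = σ := by simp
    rw [← rep_aux X T (𝟙 (op n)) σ σ h]
    have e : (CategoryOfElements.homMk (X.elementsMk (op n) σ) (X.elementsMk (op n) σ)
        (𝟙 (op n)) h) = 𝟙 _ := CategoryOfElements.ext X _ _ rfl
    rw [e, op_id, T.map_id, Category.comp_id]
  map_comp {n m k} θ θ' := by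
    ext σ
    simp only [Category.assoc, limit.lift_π, Fan.mk_π_app]
    rw [← Category.assoc]
    simp only [limit.lift_π, Fan.mk_π_app, Category.assoc, ← T.map_comp]
    have h : X.map (θ ≫ θ').op σ = X.map θ.op (X.map θ'.op σ) := by
      rw [op_comp, FunctorToTypes.map_comp_apply]
    rw [← rep_aux X T (θ ≫ θ').op σ _ h]
    congr 1

end GZ

namespace GZ
variable {𝒜 : Type u} [Category.{v} 𝒜] [HasLimits 𝒜]

/-- The functor `Δ/φ : Δ/X ⥤ Δ/Y` induced by a simplicial map `φ : X ⟶ Y`. -/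
def emapOp {X Y : SSet.{v}} (φ : X ⟶ Y) : SimplexCat X ⥤ SimplexCat Y :=
  (CategoryOfElements.map φ).op

/-- The base-change morphism of cosimplicial replacements induced by a simplicial map
`g : W ⟶ V` and a natural transformation `κ : (Δ/g) ⋙ T ⟶ S`. -/
noncomputable def pullNT {W V : SSet.{v}} (g : W ⟶ V) (T : SimplexCat V ⥤ 𝒜)
    (S : SimplexCat W ⥤ 𝒜) (κ : emapOp g ⋙ T ⟶ S) : rep V T ⟶ rep W S where
  app n := Pi.lift fun x : W.obj (op n) =>
    Pi.π (fun σ : V.obj (op n) => T.obj (elt V σ)) (g.app _ x) ≫ κ.app (elt W x)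
  naturality {n m} θ := by
    dsimp only [rep]
    ext x
    simp only [Category.assoc, limit.lift_π, Fan.mk_π_app, limit.lift_π_assoc]
    have h : V.map θ.op (g.app (op m) x) = g.app (op n) (W.map θ.op x) :=
      (NatTrans.naturality_apply g θ.op x).symm
    refine (Category.assoc _ _ _).symm.trans ?_
    refine Eq.trans ?_ (Category.assoc _ _ _).symm
    refine Eq.trans ?_ (congrArg (fun t => Pi.π (fun σ : V.obj (op n) => T.obj (elt V σ))
      (g.app (op n) (W.map θ.op x)) ≫ t) (κ.naturality (eltHom W θ.op x)))
    refine Eq.trans ?_ (Category.assoc _ _ _)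
    refine congrArg (fun t => t ≫ κ.app (elt W x)) ?_
    refine (limit.lift_π _ _).trans ?_
    exact (rep_aux V T θ.op (g.app (op m) x) _ h).symm


/-- The Gabriel–Zisman cochain complex `C^*_GZ(X, T)`. -/
noncomputable def cochainComplexGZ [Preadditive 𝒜] (X : SSet.{v}) (T : SimplexCat X ⥤ 𝒜) :
    CochainComplex 𝒜 ℕ :=
  (AlgebraicTopology.alternatingCofaceMapComplex 𝒜).obj (rep X T)

/-- The fiber `F_y = Δ[n] ×_Y X` of `f : X ⟶ Y` over a simplex `y : Δ[n] ⟶ Y`,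
given by the (explicit) pullback of `f` along `y` in simplicial sets. -/
def fiber {X Y : SSet.{v}} (f : X ⟶ Y) {k : SimplexCategory}
    (y : (SSet.stdSimplex.obj k : SSet.{v}) ⟶ Y) : SSet.{v} where
  obj m := {p : (SSet.stdSimplex.obj k).obj m × X.obj m // y.app m p.1 = f.app m p.2}
  map {m m'} θ := TypeCat.ofHom fun p => ⟨⟨(SSet.stdSimplex.obj k).map θ p.1.1, X.map θ p.1.2⟩, by
    have h1 := ConcreteCategory.congr_hom (y.naturality θ) p.1.1
    have h2 := ConcreteCategory.congr_hom (f.naturality θ) p.1.2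
    dsimp at h1 h2 ⊢
    rw [h1, h2, p.2]⟩
  map_id m := by
    refine ConcreteCategory.hom_ext _ _ fun p => ?_
    apply Subtype.ext
    apply Prod.ext <;> simp
  map_comp {m m' m''} θ θ' := by
    refine ConcreteCategory.hom_ext _ _ fun p => ?_
    apply Subtype.ext
    apply Prod.ext <;> simp

/-- First projection of the fiber, to the standard simplex. -/
def fiberP {X Y : SSet.{v}} (f : X ⟶ Y) {k : SimplexCategory}
    (y : (SSet.stdSimplex.obj k : SSet.{v}) ⟶ Y) :
    fiber f y ⟶ (SSet.stdSimplex.obj k : SSet.{v}) where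
  app m := TypeCat.ofHom fun z => z.1.1

/-- Second projection of the fiber, to `X`. -/
def fiberYbar {X Y : SSet.{v}} (f : X ⟶ Y) {k : SimplexCategory}
    (y : (SSet.stdSimplex.obj k : SSet.{v}) ⟶ Y) :
    fiber f y ⟶ X where
  app m := TypeCat.ofHom fun z => z.1.2

lemma eqToHom_nat {Y : SSet.{v}} (T : SimplexCat Y ⥤ 𝒜) {u w : SimplexCategoryᵒᵖ}
    (g : u ⟶ w) {a a' : Y.obj u} {b b' : Y.obj w} (ha : a = a') (hb : b = b')
    (h : Y.map g a = b) (h' : Y.map g a' = b') :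
    T.map ((CategoryOfElements.homMk (Y.elementsMk u a) (Y.elementsMk w b) g h).op) ≫
        eqToHom (congrArg (fun s => T.obj (op (Y.elementsMk u s))) ha) =
      eqToHom (congrArg (fun s => T.obj (op (Y.elementsMk w s))) hb) ≫
        T.map ((CategoryOfElements.homMk (Y.elementsMk u a') (Y.elementsMk w b') g h').op) := by
  subst ha; subst hb; simp

/-- The identification of the two restrictions of `T` to the simplex category of the
fiber, coming from the equality `y ∘ p = f ∘ ȳ`. -/
def κfib {X Y : SSet.{v}} (f : X ⟶ Y) {k : SimplexCategory}
    (y : (SSet.stdSimplex.obj k : SSet.{v}) ⟶ Y) (T : SimplexCat Y ⥤ 𝒜) :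
    emapOp (fiberP f y) ⋙ (emapOp y ⋙ T) ⟶
      emapOp (fiberYbar f y) ⋙ (emapOp f ⋙ T) where
  app e := eqToHom
    (congrArg (fun s => T.obj (op (Y.elementsMk e.unop.1 s))) e.unop.2.2)
  naturality {e e'} φ := eqToHom_nat T φ.unop.val e'.unop.2.2 e.unop.2.2 _ _

end GZ

/-!
On simplicial sets `Z` over `Y`, consider the presheaves `Z ↦ Cⁿ(Z, T)` and
`Z ↦ Cⁿ(Z ×_Y X, f^*T)`. Each is injective relative to the restriction functor `U` from presheaves
to families indexed by the simplices of `Y`. The right adjoint `R` of `U` is formed by products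
over sets of morphisms, hence is exact because products in `𝒜` are. In the degreewise split exact
sequence `0 ⟶ K ⟶ RUK ⟶ coker ⟶ 0` of complexes of relatively injective presheaves, the cokernel
is again relatively injective. A morphism `φ` which is a quasi-isomorphism over every simplex
induces a quasi-isomorphism on the middle terms and again on the cokernels over every simplex, so
dimension shifting shows that `φ` is a quasi-isomorphism over every `Z`, in particular over `Y`.
-/

namespace GZ

section FourLemma

open HomologicalComplex HomologySequence ComposableArrows Abelian

variable {C ι : Type*} [Category* C] [Abelian C] {c : ComplexShape ι}
  {S₁ S₂ : ShortComplex (HomologicalComplex C c)} (φ : S₁ ⟶ S₂)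

include φ in
lemma mono_homologyMap_τ₁ (hS₁ : S₁.ShortExact) (hS₂ : S₂.ShortExact) (i : ι)
    (h₂ : Mono (homologyMap φ.τ₂ i))
    (h₂' : ∀ j, c.Rel j i → Epi (homologyMap φ.τ₂ j))
    (h₃ : ∀ j, c.Rel j i → Mono (homologyMap φ.τ₃ j)) :
    Mono (homologyMap φ.τ₁ i) := by
  by_cases hi : ∃ j, c.Rel j i
  · obtain ⟨j, hji⟩ := hi
    exact mono_of_epi_of_mono_of_mono
      ((δ₀Functor ⋙ δlastFunctor).map (mapComposableArrows₅ φ hS₁ hS₂ j i hji))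
      (composableArrows₅_exact hS₁ j i hji).δ₀.δlast
      (composableArrows₅_exact hS₂ j i hji).δ₀.δlast (h₂' j hji) (h₃ j hji) h₂
  · have := hS₁.mono_f
    have := mono_homologyMap_of_mono_of_not_rel S₁.f i (not_exists.1 hi)
    have comm : homologyMap φ.τ₁ i ≫ homologyMap S₂.f i =
        homologyMap S₁.f i ≫ homologyMap φ.τ₂ i := by
      rw [← homologyMap_comp, ← homologyMap_comp, φ.comm₁₂]
    exact mono_of_mono_fac comm

lemma epi_homologyMap_τ₁ (hS₁ : S₁.ShortExact) (hS₂ : S₂.ShortExact) (i : ι)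
    (h₂ : Epi (homologyMap φ.τ₂ i)) (h₃ : Mono (homologyMap φ.τ₃ i))
    (h₃' : ∀ j, c.Rel j i → Epi (homologyMap φ.τ₃ j)) :
    Epi (homologyMap φ.τ₁ i) := by
  by_cases hi : ∃ j, c.Rel j i
  · obtain ⟨j, hji⟩ := hi
    exact epi_of_epi_of_epi_of_mono
      ((δ₀Functor ⋙ δ₀Functor).map (mapComposableArrows₅ φ hS₁ hS₂ j i hji))
      (composableArrows₅_exact hS₁ j i hji).δ₀.δ₀
      (composableArrows₅_exact hS₂ j i hji).δ₀.δ₀ (h₃' j hji) h₂ h₃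
  · have := hS₂.mono_f
    exact epi_of_mono_of_epi_of_mono (mapComposableArrows₂ φ i)
      (composableArrows₂_exact hS₁ i) (composableArrows₂_exact hS₂ i)
      (mono_homologyMap_of_mono_of_not_rel S₂.f i (not_exists.1 hi)) h₂ h₃

end FourLemma

section RelativeInjectivity

variable {𝓑 𝓑' 𝓒 𝓒' : Type*} [Category* 𝓑] [Category* 𝓑'] [Category* 𝓒] [Category* 𝓒']

/-- An object `F` is injective relative to a functor `U` if morphisms to `F` extend along every
morphism that becomes a split monomorphism after applying `U`. -/
def IsRelInjective (U : 𝓑 ⥤ 𝓒) (F : 𝓑) : Prop :=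
  ∀ ⦃G H : 𝓑⦄ (i : G ⟶ H), IsSplitMono (U.map i) → ∀ u : G ⟶ F, ∃ w : H ⟶ F, i ≫ w = u

lemma isRelInjective_id (A : 𝓒) : IsRelInjective (𝟭 𝓒) A := fun _ _ i hi u =>
  have : IsSplitMono i := hi
  ⟨retraction i ≫ u, by simp⟩

namespace IsRelInjective

lemma of_retract {U : 𝓑 ⥤ 𝓒} {F F' : 𝓑} (r : Retract F F') (hF' : IsRelInjective U F') :
    IsRelInjective U F := by
  intro G H i hi u
  obtain ⟨w, hw⟩ := hF' i hi (u ≫ r.i)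
  exact ⟨w ≫ r.r, by simp [reassoc_of% hw]⟩

lemma rightAdjoint_obj {U : 𝓑 ⥤ 𝓒} {U' : 𝓑' ⥤ 𝓒'} {L : 𝓑 ⥤ 𝓑'} {P : 𝓑' ⥤ 𝓑} (adj : L ⊣ P)
    (hL : ∀ ⦃G H : 𝓑⦄ (i : G ⟶ H), IsSplitMono (U.map i) → IsSplitMono (U'.map (L.map i)))
    {F : 𝓑'} (hF : IsRelInjective U' F) : IsRelInjective U (P.obj F) := by
  intro G H i hi u
  obtain ⟨w, hw⟩ := hF (L.map i) (hL i hi) ((adj.homEquiv _ _).symm u)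
  exact ⟨adj.homEquiv _ _ w, by rw [← adj.homEquiv_naturality_left, hw, Equiv.apply_symm_apply]⟩

lemma exists_retraction_unit {U : 𝓑 ⥤ 𝓒} {R : 𝓒 ⥤ 𝓑} (adj : U ⊣ R) {F : 𝓑}
    (hF : IsRelInjective U F) : ∃ r, adj.unit.app F ≫ r = 𝟙 F :=
  hF _ ⟨⟨_, adj.left_triangle_components F⟩⟩ (𝟙 F)

end IsRelInjective

end RelativeInjectivity

section UnitSequence

open HomologicalComplex HomologySequence

variable {𝓑 𝓒 ι : Type*} [Category* 𝓑] [Category* 𝓒] [Abelian 𝓑] [Abelian 𝓒]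
  {c : ComplexShape ι} {U : 𝓑 ⥤ 𝓒} {R : 𝓒 ⥤ 𝓑} [U.Additive] [R.Additive] (adj : U ⊣ R)

/-- The unit of `adj`, applied degreewise to a complex `K`. -/
def unitComplex (K : HomologicalComplex 𝓑 c) :
    K ⟶ (R.mapHomologicalComplex c).obj ((U.mapHomologicalComplex c).obj K) where
  f n := adj.unit.app (K.X n)
  comm' n m _ := (adj.unit.naturality (K.d n m)).symm

lemma unitComplex_naturality {K L : HomologicalComplex 𝓑 c} (φ : K ⟶ L) :
    φ ≫ unitComplex adj L =
      unitComplex adj K ≫ (R.mapHomologicalComplex c).map ((U.mapHomologicalComplex c).map φ) := by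
  ext n : 1
  exact adj.unit.naturality (φ.f n)

/-- The first step `K ⟶ RUK ⟶ coker` of the canonical relative resolution of a complex `K`. -/
noncomputable def unitSequence (K : HomologicalComplex 𝓑 c) :
    ShortComplex (HomologicalComplex 𝓑 c) where
  X₁ := K
  X₂ := (R.mapHomologicalComplex c).obj ((U.mapHomologicalComplex c).obj K)
  X₃ := cokernel (unitComplex adj K)
  f := unitComplex adj K
  g := cokernel.π _
  zero := cokernel.condition _

/-- The functoriality of `unitSequence` in the complex. -/
noncomputable def unitSequenceMap {K L : HomologicalComplex 𝓑 c} (φ : K ⟶ L) :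
    unitSequence adj K ⟶ unitSequence adj L where
  τ₁ := φ
  τ₂ := (R.mapHomologicalComplex c).map ((U.mapHomologicalComplex c).map φ)
  τ₃ := cokernel.map _ _ φ _ (unitComplex_naturality adj φ).symm
  comm₁₂ := unitComplex_naturality adj φ
  comm₂₃ := (cokernel.π_desc _ _ _).symm

variable {K L : HomologicalComplex 𝓑 c}

lemma unitSequence_shortExact (hK : ∀ n, IsRelInjective U (K.X n)) :
    (unitSequence adj K).ShortExact where
  exact := ShortComplex.exact_cokernel _
  mono_f := mono_of_mono_f _ fun n =>
    have ⟨r, hr⟩ := (hK n).exists_retraction_unit adj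
    (SplitMono.mk r hr).mono
  epi_g := coequalizer.π_epi

lemma isRelInjective_unitSequence_X₃ (hK : ∀ n, IsRelInjective U (K.X n)) (n : ι) :
    IsRelInjective U ((unitSequence adj K).X₃.X n) := by
  obtain ⟨r, hr⟩ := (hK n).exists_retraction_unit adj
  have exact_n := (unitSequence_shortExact adj hK).map_of_exact (eval 𝓑 c n)
  let split := ShortComplex.Splitting.ofExactOfRetraction _ exact_n.exact r hr exact_n.epi_g
  refine .of_retract ⟨split.s, _, split.s_g⟩ ?_
  exact (isRelInjective_id (U.obj (K.X n))).rightAdjoint_obj adj fun _ _ _ hi => hi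

variable (U) in
/-- A morphism of complexes of `U`-relatively injective objects that becomes a quasi-isomorphism
after applying `U`. -/
structure IsRelQuasiIso (φ : K ⟶ L) : Prop where
  source (n : ι) : IsRelInjective U (K.X n)
  target (n : ι) : IsRelInjective U (L.X n)
  quasiIso_map : QuasiIso ((U.mapHomologicalComplex c).map φ)

namespace IsRelQuasiIso

variable {φ : K ⟶ L} [PreservesFiniteColimits R]

include adj in
lemma quasiIso_unitSequenceMap_τ₂ (hφ : IsRelQuasiIso U φ) :
    QuasiIso (unitSequenceMap adj φ).τ₂ :=
  have := adj.rightAdjoint_preservesLimits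
  have := hφ.quasiIso_map
  quasiIso_map_of_preservesHomology ((U.mapHomologicalComplex c).map φ) R

variable [PreservesFiniteLimits U]

lemma unitSequenceMap_τ₃ (hφ : IsRelQuasiIso U φ) :
    IsRelQuasiIso U (unitSequenceMap adj φ).τ₃ where
  source := isRelInjective_unitSequence_X₃ adj hφ.source
  target := isRelInjective_unitSequence_X₃ adj hφ.target
  quasiIso_map :=
    have := adj.leftAdjoint_preservesColimits
    have := hφ.quasiIso_unitSequenceMap_τ₂ adj
    quasiIso_τ₃ ((U.mapHomologicalComplex c).mapShortComplex.map (unitSequenceMap adj φ))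
      ((unitSequence_shortExact adj hφ.source).map_of_exact _)
      ((unitSequence_shortExact adj hφ.target).map_of_exact _) hφ.quasiIso_map
      (quasiIso_map_of_preservesHomology (unitSequenceMap adj φ).τ₂ U)

include adj in
theorem quasiIso (hc : WellFounded c.Rel) (hφ : IsRelQuasiIso U φ) : QuasiIso φ := by
  suffices ∀ n, IsIso (homologyMap φ n) from
    ⟨fun n => (quasiIsoAt_iff_isIso_homologyMap φ n).2 (this n)⟩
  intro n
  induction n using hc.induction generalizing K L with
  | h n ih =>
    have mono_n {K L : HomologicalComplex 𝓑 c} {φ : K ⟶ L} (hφ : IsRelQuasiIso U φ) :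
        Mono (homologyMap φ n) := by
      have := hφ.quasiIso_unitSequenceMap_τ₂ adj
      exact mono_homologyMap_τ₁ (unitSequenceMap adj φ) (unitSequence_shortExact adj hφ.source)
        (unitSequence_shortExact adj hφ.target) n inferInstance (fun _ _ => inferInstance)
        fun j hj => have := ih j hj (hφ.unitSequenceMap_τ₃ adj); inferInstance
    have := mono_n hφ
    have := hφ.quasiIso_unitSequenceMap_τ₂ adj
    have : Epi (homologyMap φ n) :=
      epi_homologyMap_τ₁ (unitSequenceMap adj φ) (unitSequence_shortExact adj hφ.source)
        (unitSequence_shortExact adj hφ.target) n inferInstance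
        (mono_n (hφ.unitSequenceMap_τ₃ adj))
        fun j hj => have := ih j hj (hφ.unitSequenceMap_τ₃ adj); inferInstance
    exact isIso_of_mono_of_epi _

end IsRelQuasiIso

end UnitSequence

section ExactRan

universe w

variable {J D H : Type*} [Category* J] [Category* D] [Category* H] (L : J ⥤ D)

/-- The pointwise formula for `L.ran`, naturally in the functor being extended. -/
noncomputable def ranCompEvaluationIso [∀ X, HasLimitsOfShape (StructuredArrow X L) H] (X : D) :
    L.ran ⋙ (evaluation D H).obj X ≅
      (Functor.whiskeringLeft _ _ H).obj (StructuredArrow.proj X L) ⋙ lim :=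
  NatIso.ofComponents (fun F => L.ranObjObjIsoLimit F X) fun {F G} α => by
    refine limit.hom_ext fun a => ?_
    have counit_nat : (L.ran.map α).app (L.obj a.right) ≫ (L.ranCounit.app G).app a.right =
        (L.ranCounit.app F).app a.right ≫ α.app a.right :=
      NatTrans.congr_app (L.ranCounit.naturality α) a.right
    have map_nat := (L.ran.map α).naturality_assoc a.hom ((L.ranCounit.app G).app a.right)
    rw [counit_nat] at map_nat
    simp only [Functor.comp_obj, evaluation_obj_obj, Functor.whiskeringLeft_obj_obj, lim_obj,
      Functor.comp_map, evaluation_obj_map, Category.assoc, Functor.ranObjObjIsoLimit_hom_π,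
      Functor.id_obj, Functor.whiskeringLeft_obj_map, lim_map, limMap_π, Functor.whiskerLeft_app,
      Functor.ranObjObjIsoLimit_hom_π_assoc]
    exact map_nat.symm

lemma preservesFiniteColimits_ran [∀ X, HasLimitsOfShape (StructuredArrow X L) H]
    [∀ X, HasExactLimitsOfShape (StructuredArrow X L) H] [HasFiniteColimits H] :
    PreservesFiniteColimits (L.ran : (J ⥤ H) ⥤ (D ⥤ H)) :=
  preservesFiniteColimits_of_evaluation _ fun X =>
    preservesFiniteColimits_of_natIso (ranCompEvaluationIso L X).symm

lemma isDiscrete_structuredArrow [IsDiscrete J] (X : D) : IsDiscrete (StructuredArrow X L) where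
  subsingleton _ _ := ⟨fun _ _ => StructuredArrow.hom_ext _ _ (Subsingleton.elim _ _)⟩
  eq_of_hom {a b} g := by
    obtain ⟨⟨⟨⟩⟩, j, x⟩ := a
    obtain ⟨⟨⟨⟩⟩, k, y⟩ := b
    obtain rfl : j = k := obj_ext_of_isDiscrete g.right
    have hxy : x = y := by simpa [Subsingleton.elim g.right (𝟙 j)] using StructuredArrow.w g
    rw [hxy]

/-- A category with no morphisms other than identities is equivalent to the discrete category on
its objects. -/
noncomputable def discreteEquivalence (C : Type*) [Category* C] [IsDiscrete C] :
    Discrete C ≌ C where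
  functor := Discrete.functor id
  inverse :=
    { obj := Discrete.mk
      map f := Discrete.eqToHom (obj_ext_of_isDiscrete f) }
  unitIso := NatIso.ofComponents (fun _ => Iso.refl _)
  counitIso := NatIso.ofComponents (fun _ => Iso.refl _)

lemma hasExactLimitsOfShape_of_isDiscrete {C : Type w} [Category* C] [IsDiscrete C]
    [HasProducts.{w} H] [AB4StarOfSize.{w} H] [HasLimitsOfShape C H] : HasExactLimitsOfShape C H :=
  .of_domain_equivalence _ (discreteEquivalence C)

end ExactRan

section RestrictionToFamily

universe w

variable {D 𝒜 : Type*} [Category.{w} D] [Category* 𝒜] {I : Type w} (S : I → D)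

variable (𝒜) in
/-- Restriction of functors to a family of objects. -/
abbrev restriction : (D ⥤ 𝒜) ⥤ (Discrete I ⥤ 𝒜) :=
  (Functor.whiskeringLeft _ _ 𝒜).obj (Discrete.functor S)

lemma isSplitMono_restriction_map_iff {G H : D ⥤ 𝒜} (i : G ⟶ H) :
    IsSplitMono ((restriction 𝒜 S).map i) ↔ ∀ j, IsSplitMono (i.app (S j)) where
  mp _ j := inferInstanceAs
    (IsSplitMono (((evaluation _ 𝒜).obj (Discrete.mk j)).map ((restriction 𝒜 S).map i)))
  mpr _ := .mk' ⟨Discrete.natTrans fun j => retraction (i.app (S j.as)), by ext; simp⟩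

variable [Abelian 𝒜] [HasLimitsOfSize.{w, w} 𝒜] [AB4StarOfSize.{w} 𝒜]

lemma preservesFiniteColimits_ran_discrete :
    PreservesFiniteColimits
      ((Discrete.functor S).ran : (Discrete I ⥤ 𝒜) ⥤ (D ⥤ 𝒜)) :=
  have (d : D) : HasExactLimitsOfShape (StructuredArrow d (Discrete.functor S)) 𝒜 :=
    have := isDiscrete_structuredArrow (Discrete.functor S) d
    hasExactLimitsOfShape_of_isDiscrete
  preservesFiniteColimits_ran _

variable {ι : Type*} {c : ComplexShape ι} {K L : HomologicalComplex (D ⥤ 𝒜) c}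

theorem quasiIso_of_isRelInjective_restriction (hc : WellFounded c.Rel)
    (hK : ∀ n, IsRelInjective (restriction 𝒜 S) (K.X n))
    (hL : ∀ n, IsRelInjective (restriction 𝒜 S) (L.X n)) (φ : K ⟶ L)
    (hφ : ∀ i, QuasiIso ((((evaluation D 𝒜).obj (S i)).mapHomologicalComplex c).map φ)) :
    QuasiIso φ :=
  have := ((Discrete.functor S).ranAdjunction 𝒜).right_adjoint_additive
  have := preservesFiniteColimits_ran_discrete (𝒜 := 𝒜) S
  IsRelQuasiIso.quasiIso ((Discrete.functor S).ranAdjunction 𝒜) hc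
    ⟨hK, hL, HomologicalComplex.quasiIso_iff_evaluation _ |>.2 fun j => hφ j.as⟩

end RestrictionToFamily

section CosimplicialObjects

open AlgebraicTopology HomologicalComplex

variable {C D : Type*} [Category* C] [Category* D] [Preadditive C] [Preadditive D]

lemma alternatingCofaceMapComplex_obj_d_succ (X : CosimplicialObject C) (n : ℕ) :
    ((alternatingCofaceMapComplex C).obj X).d n (n + 1) = AlternatingCofaceMapComplex.objD X n :=
  CochainComplex.of_d (fun n => X.obj (SimplexCategory.mk n))
    (AlternatingCofaceMapComplex.objD X) n

/-- Additive functors commute with the formation of alternating coface map complexes. -/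
noncomputable def alternatingCofaceMapComplexCompIso (F : C ⥤ D) [F.Additive] :
    alternatingCofaceMapComplex C ⋙ F.mapHomologicalComplex (ComplexShape.up ℕ) ≅
      (CosimplicialObject.whiskering C D).obj F ⋙ alternatingCofaceMapComplex D :=
  NatIso.ofComponents
    (fun X => Hom.isoOfComponents (fun _ => Iso.refl _) (by
      rintro n _ rfl
      have map_d : F.map (AlternatingCofaceMapComplex.objD X n) = AlternatingCofaceMapComplex.objD
          (((CosimplicialObject.whiskering C D).obj F).obj X) n := by
        simp only [AlternatingCofaceMapComplex.objD, Functor.map_sum, Functor.map_zsmul]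
        rfl
      refine (Category.id_comp _).trans (Eq.trans ?_ (Category.comp_id _).symm)
      refine (alternatingCofaceMapComplex_obj_d_succ _ n).trans ?_
      exact map_d.symm.trans (congrArg F.map (alternatingCofaceMapComplex_obj_d_succ X n).symm)))
    (fun f => by
      ext n : 1
      exact (Category.comp_id _).trans (Category.id_comp _).symm)

end CosimplicialObjects

section CosimplicialQuasiIso

open AlgebraicTopology

universe w

variable {D 𝒜 : Type*} [Category.{w} D] [Category* 𝒜] [Abelian 𝒜]

variable (𝒜) in
/-- The class of morphisms of cosimplicial objects that induce isomorphisms on the cohomology of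
alternating coface map complexes. -/
def cosimplicialQuasiIso : MorphismProperty (CosimplicialObject 𝒜) :=
  (HomologicalComplex.quasiIso 𝒜 (ComplexShape.up ℕ)).inverseImage (alternatingCofaceMapComplex 𝒜)

instance : (cosimplicialQuasiIso 𝒜).RespectsIso :=
  inferInstanceAs (MorphismProperty.inverseImage _ _).RespectsIso

lemma cosimplicialQuasiIso_iff_isIso_homologyMap {A B : CosimplicialObject 𝒜} (φ : A ⟶ B) :
    cosimplicialQuasiIso 𝒜 φ ↔
      ∀ q, IsIso (HomologicalComplex.homologyMap ((alternatingCofaceMapComplex 𝒜).map φ) q) := by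
  simp only [← quasiIsoAt_iff_isIso_homologyMap]
  exact quasiIso_iff _

variable {G G' : D ⥤ CosimplicialObject 𝒜} (φ : G ⟶ G')

/-- The morphism of alternating coface map complexes in the functor category `D ⥤ 𝒜` induced by
a natural transformation between functors with values in cosimplicial objects. -/
abbrev flipComplexMap :=
  (alternatingCofaceMapComplex (D ⥤ 𝒜)).map (X := G.flip) (Y := G'.flip) ((flipFunctor _ _ _).map φ)

lemma quasiIso_evaluation_flip_iff (d : D) :
    QuasiIso ((((evaluation D 𝒜).obj d).mapHomologicalComplex (ComplexShape.up ℕ)).map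
      (flipComplexMap φ)) ↔ cosimplicialQuasiIso 𝒜 (φ.app d) :=
  (HomologicalComplex.quasiIso 𝒜 (ComplexShape.up ℕ)).arrow_mk_iso_iff
    (((Functor.mapArrowFunctor _ _).mapIso
      (alternatingCofaceMapComplexCompIso ((evaluation D 𝒜).obj d))).app
        (Arrow.mk (X := (G.flip : CosimplicialObject (D ⥤ 𝒜))) (Y := G'.flip)
          ((flipFunctor _ _ _).map φ)))

variable {I : Type w} (S : I → D) [HasLimitsOfSize.{w, w} 𝒜] [AB4StarOfSize.{w} 𝒜]

theorem cosimplicialQuasiIso_app_of_isRelInjective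
    (hG : ∀ n, IsRelInjective (restriction 𝒜 S) (G.flip.obj n))
    (hG' : ∀ n, IsRelInjective (restriction 𝒜 S) (G'.flip.obj n))
    (hφ : ∀ i, cosimplicialQuasiIso 𝒜 (φ.app (S i))) (d : D) :
    cosimplicialQuasiIso 𝒜 (φ.app d) := by
  have wf : WellFounded (ComplexShape.up ℕ).Rel :=
    Subrelation.wf (fun {_ _} h => h ▸ Nat.lt_succ_self _) Nat.lt_wfRel.wf
  have := quasiIso_of_isRelInjective_restriction S wf
    (fun n => hG (SimplexCategory.mk n)) (fun n => hG' (SimplexCategory.mk n)) (flipComplexMap φ)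
    fun i => (quasiIso_evaluation_flip_iff φ (S i)).2 (hφ i)
  exact (quasiIso_evaluation_flip_iff φ d).1
    (HomologicalComplex.quasiIso_iff_evaluation _ |>.1 this d)

end CosimplicialQuasiIso

section RestrictedCochains

variable {𝒜 : Type u} [Category.{v} 𝒜] [HasLimits 𝒜] {X Y : SSet.{v}} (T : SimplexCat Y ⥤ 𝒜)

lemma over_w_app {Z W : Over Y} (a : Z ⟶ W) {m : SimplexCategoryᵒᵖ} (z : Z.left.obj m) :
    W.hom.app m (a.left.app m z) = Z.hom.app m z :=
  ConcreteCategory.congr_hom (NatTrans.congr_app (Over.w a) m) z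

/-- The projection of the cosimplicial replacement of `S`, in degree `n`, to its factor at the
`n`-simplex `w`. -/
noncomputable def repπ {W : SSet.{v}} (S : SimplexCat W ⥤ 𝒜) {n : SimplexCategory}
    (w : W.obj (op n)) : (rep W S).obj n ⟶ S.obj (elt W w) :=
  Pi.π _ w

lemma rep_hom_ext {W : SSet.{v}} {S : SimplexCat W ⥤ 𝒜} {n : SimplexCategory} {B : 𝒜}
    {a b : B ⟶ (rep W S).obj n} (h : ∀ w, a ≫ repπ S w = b ≫ repπ S w) : a = b :=
  Pi.hom_ext _ _ h

lemma pullNT_app_repπ {W V : SSet.{v}} (g : W ⟶ V) (S : SimplexCat V ⥤ 𝒜) (S' : SimplexCat W ⥤ 𝒜)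
    (κ : emapOp g ⋙ S ⟶ S') {n : SimplexCategory} (w : W.obj (op n)) :
    (pullNT g S S' κ).app n ≫ repπ S' w = repπ S (g.app _ w) ≫ κ.app (elt W w) :=
  limit.lift_π _ _

lemma pullNT_comp {U V W : SSet.{v}} {g : U ⟶ V} {h : V ⟶ W} {R : SimplexCat U ⥤ 𝒜}
    {S : SimplexCat V ⥤ 𝒜} {T : SimplexCat W ⥤ 𝒜} (κ : emapOp h ⋙ T ⟶ S) (μ : emapOp g ⋙ S ⟶ R)
    {ν : emapOp (g ≫ h) ⋙ T ⟶ R}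
    (hν : ∀ {n} (x : U.obj (op n)),
      ν.app (elt U x) = κ.app (elt V (g.app _ x)) ≫ μ.app (elt U x)) :
    pullNT (g ≫ h) T R ν = pullNT h T S κ ≫ pullNT g S R μ := by
  refine CosimplicialObject.hom_ext _ _ fun n => rep_hom_ext fun x => ?_
  calc
    (pullNT (g ≫ h) T R ν).app n ≫ repπ R x =
        repπ T (h.app _ (g.app _ x)) ≫ κ.app (elt V (g.app _ x)) ≫ μ.app (elt U x) :=
      (pullNT_app_repπ _ _ _ _ x).trans (congrArg (_ ≫ ·) (hν x))
    _ = ((pullNT h T S κ).app n ≫ repπ S (g.app _ x)) ≫ μ.app (elt U x) :=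
      (Category.assoc _ _ _).symm.trans (congrArg (· ≫ _) (pullNT_app_repπ h T S κ _).symm)
    _ = (pullNT h T S κ).app n ≫ (pullNT g S R μ).app n ≫ repπ R x :=
      (Category.assoc _ _ _).trans (congrArg (_ ≫ ·) (pullNT_app_repπ g S R μ x).symm)
    _ = (pullNT h T S κ ≫ pullNT g S R μ).app n ≫ repπ R x := (Category.assoc _ _ _).symm

/-- The identification of the restrictions of `T` to `Z` along `Z.hom` and along `a ≫ W.hom`. -/
def overTransport {Z W : Over Y} (a : Z ⟶ W) :
    emapOp a.left ⋙ (emapOp W.hom ⋙ T) ⟶ emapOp Z.hom ⋙ T where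
  app e := eqToHom (congrArg (fun s => T.obj (elt Y s)) (over_w_app a e.unop.2))
  naturality {e e'} φ :=
    eqToHom_nat T φ.unop.val (over_w_app a e'.unop.2) (over_w_app a e.unop.2) _ _

/-- The presheaf on simplicial sets over `Y` sending `Z` to the cosimplicial replacement of the
restriction of `T` to `Z`. -/
noncomputable def restrictedRep : (Over Y)ᵒᵖ ⥤ CosimplicialObject 𝒜 where
  obj Z := rep Z.unop.left (emapOp Z.unop.hom ⋙ T)
  map a := pullNT a.unop.left _ _ (overTransport T a.unop)
  map_id Z := by
    ext n : 2
    exact rep_hom_ext fun z =>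
      (pullNT_app_repπ _ _ _ _ z).trans ((Category.comp_id _).trans (Category.id_comp _).symm)
  map_comp a b := pullNT_comp (overTransport T a.unop) (overTransport T b.unop) fun x =>
    (eqToHom_trans (congrArg (fun s => T.obj (elt Y s)) (over_w_app a.unop (b.unop.left.app _ x)))
      (congrArg (fun s => T.obj (elt Y s)) (over_w_app b.unop x))).symm

/-- The presheaf of Gabriel–Zisman `n`-cochains of the restrictions of `T`. -/
noncomputable def restrictedCochains (n : SimplexCategory) : (Over Y)ᵒᵖ ⥤ 𝒜 :=
  (restrictedRep T).flip.obj n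

variable {n : SimplexCategory}

/-- The projection of `∏ T(Z.hom z)` to its factor at `z`. Any name `y` for the simplex `Z.hom z`
is allowed, which avoids transports along equalities of simplices. -/
noncomputable def coord (Z : (Over Y)ᵒᵖ) (z : Z.unop.left.obj (op n)) (y : Y.obj (op n))
    (h : Z.unop.hom.app _ z = y) : (restrictedCochains T n).obj Z ⟶ T.obj (elt Y y) :=
  repπ (emapOp Z.unop.hom ⋙ T) z ≫ eqToHom (congrArg (fun s => T.obj (elt Y s)) h)

lemma coord_rfl (Z : (Over Y)ᵒᵖ) (z : Z.unop.left.obj (op n)) :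
    coord T Z z _ rfl = repπ (emapOp Z.unop.hom ⋙ T) z :=
  Category.comp_id _

lemma coord_congr {Z : (Over Y)ᵒᵖ} {z z' : Z.unop.left.obj (op n)} (hz : z = z') {y : Y.obj (op n)}
    (h : Z.unop.hom.app _ z = y) : coord T Z z y h = coord T Z z' y (hz ▸ h) := by
  subst hz
  rfl

variable {T} in
lemma coord_hom_ext {Z : (Over Y)ᵒᵖ} {B : 𝒜} {u w : B ⟶ (restrictedCochains T n).obj Z}
    (h : ∀ z, u ≫ coord T Z z _ rfl = w ≫ coord T Z z _ rfl) : u = w := by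
  simp only [coord_rfl] at h
  exact rep_hom_ext h

lemma restrictedCochains_map_coord {Z W : (Over Y)ᵒᵖ} (a : Z ⟶ W) (z : W.unop.left.obj (op n))
    (y : Y.obj (op n)) (h : W.unop.hom.app _ z = y) :
    (restrictedCochains T n).map a ≫ coord T W z y h =
      coord T Z (a.unop.left.app _ z) y ((over_w_app a.unop z).trans h) := by
  subst h
  rw [coord_rfl]
  exact pullNT_app_repπ _ _ _ _ _

/-- The family of all simplices `Δ[k] ⟶ Y`, as simplicial sets over `Y`. -/
def simplicesOver (Y : SSet.{v}) (y : Σ k, SSet.stdSimplex.obj k ⟶ Y) : (Over Y)ᵒᵖ :=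
  op (Over.mk y.2)

/-- The `n`-simplex `y` as a simplicial set over `Y`. -/
abbrev simplexOver (y : Y.obj (op n)) : Over Y := Over.mk (SSet.yonedaEquiv.symm y)

/-- The morphism over `Y` classified by a simplex `z` of `Z`; as in `coord`, any name `y` for the
image of `z` in `Y` is allowed. -/
def simplexHom (Z : Over Y) (z : Z.left.obj (op n)) (y : Y.obj (op n)) (h : Z.hom.app _ z = y) :
    simplexOver y ⟶ Z :=
  Over.homMk (SSet.yonedaEquiv.symm z) (by rw [SSet.yonedaEquiv_symm_comp, h]; rfl)

lemma simplexHom_comp {Z W : Over Y} (a : Z ⟶ W) (z : Z.left.obj (op n)) (y : Y.obj (op n))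
    (h : Z.hom.app _ z = y) :
    simplexHom Z z y h ≫ a = simplexHom W (a.left.app _ z) y ((over_w_app a z).trans h) := by
  ext : 1
  exact SSet.yonedaEquiv_symm_comp z a.left

lemma yonedaEquiv_symm_app_yonedaEquiv_id (x : X.obj (op n)) :
    (SSet.yonedaEquiv.symm x).app _ (SSet.yonedaEquiv (𝟙 (SSet.stdSimplex.obj n))) = x := by
  rw [← SSet.yonedaEquiv_comp, Category.id_comp, Equiv.apply_symm_apply]

theorem isRelInjective_restrictedCochains (n : SimplexCategory) :
    IsRelInjective (restriction 𝒜 (simplicesOver Y)) (restrictedCochains T n) := by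
  intro G H i hi u
  have (y : Y.obj (op n)) : IsSplitMono (i.app (op (simplexOver y))) :=
    (isSplitMono_restriction_map_iff _ i).1 hi ⟨n, SSet.yonedaEquiv.symm y⟩
  -- The factor of a cochain at `z` only involves the simplex `Z.hom z`, over which `i` retracts.
  let extendAt (y : Y.obj (op n)) : H.obj (op (simplexOver y)) ⟶ T.obj (elt Y y) :=
    retraction (i.app (op (simplexOver y))) ≫ u.app (op (simplexOver y)) ≫
      coord T (op (simplexOver y)) (SSet.yonedaEquiv (𝟙 _)) y
        (yonedaEquiv_symm_app_yonedaEquiv_id y)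
  let extension (Z : (Over Y)ᵒᵖ) : H.obj Z ⟶ (restrictedCochains T n).obj Z :=
    Pi.lift fun z => H.map (simplexHom Z.unop z _ rfl).op ≫ extendAt (Z.unop.hom.app _ z)
  have extension_coord (Z : (Over Y)ᵒᵖ) (z : Z.unop.left.obj (op n)) (y : Y.obj (op n))
      (h : Z.unop.hom.app _ z = y) :
      extension Z ≫ coord T Z z y h = H.map (simplexHom Z.unop z y h).op ≫ extendAt y := by
    subst h
    rw [coord_rfl]
    exact limit.lift_π _ _
  refine ⟨{ app := extension, naturality Z W b := coord_hom_ext fun z => ?_ }, ?_⟩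
  · rw [Category.assoc, extension_coord W z _ rfl, Category.assoc, restrictedCochains_map_coord,
      extension_coord, ← Functor.map_comp_assoc, ← simplexHom_comp b.unop z _ rfl]
    rfl
  · ext Z : 2
    refine coord_hom_ext fun z => ?_
    rw [NatTrans.comp_app, Category.assoc, extension_coord, ← i.naturality_assoc,
      IsSplitMono.id_assoc, u.naturality_assoc, restrictedCochains_map_coord]
    exact congrArg (_ ≫ ·) (coord_congr T (yonedaEquiv_symm_app_yonedaEquiv_id z) _)

end RestrictedCochains

section Fibers

variable {𝒜 : Type u} [Category.{v} 𝒜] [HasLimits 𝒜] {X Y : SSet.{v}} (f : X ⟶ Y)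
  (T : SimplexCat Y ⥤ 𝒜)

lemma isRelInjective_pullback_op_comp_restrictedCochains (n : SimplexCategory) :
    IsRelInjective (restriction 𝒜 (simplicesOver Y))
      ((Over.pullback f).op ⋙ restrictedCochains (emapOp f ⋙ T) n) :=
  .rightAdjoint_obj ((Over.mapPullbackAdj f).op.whiskerLeft 𝒜)
    (fun _ _ i hi => (isSplitMono_restriction_map_iff (simplicesOver X) _).2 fun x =>
      (isSplitMono_restriction_map_iff (simplicesOver Y) i).1 hi ⟨x.1, x.2 ≫ f⟩)
    (isRelInjective_restrictedCochains (emapOp f ⋙ T) n)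

/-- The restriction morphisms of cosimplicial replacements along the projections `Z ×_Y X ⟶ Z`,
natural in the simplicial set `Z` over `Y`. -/
noncomputable def restrictToPullback :
    restrictedRep T ⟶ (Over.pullback f ⋙ Over.map f).op ⋙ restrictedRep T :=
  Functor.whiskerRight (NatTrans.op (Over.mapPullbackAdj f).counit) (restrictedRep T)

theorem isPullback_fiber {k : SimplexCategory} (y : (SSet.stdSimplex.obj k : SSet.{v}) ⟶ Y) :
    IsPullback (fiberP f y) (fiberYbar f y) y f := by
  refine IsPullback.of_forall_isPullback_app fun m => (Types.isPullback_iff _ _ _ _).2 ⟨?_, ?_, ?_⟩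
  · ext z
    exact z.2
  · rintro z w ⟨hp, hybar⟩
    exact Subtype.ext (Prod.ext hp hybar)
  · exact fun s x h => ⟨⟨(s, x), h⟩, rfl, rfl⟩

variable [Abelian 𝒜]

theorem cosimplicialQuasiIso_restrictToPullback_app_iff {P Z : SSet.{v}} {p : P ⟶ Z} {q : P ⟶ X}
    {z : Z ⟶ Y} (h : IsPullback p q z f) :
    cosimplicialQuasiIso 𝒜 ((restrictToPullback f T).app (op (Over.mk z))) ↔
      cosimplicialQuasiIso 𝒜
        ((restrictedRep T).map (Over.homMk p h.w : Over.mk (q ≫ f) ⟶ Over.mk z).op) := by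
  let e : Over.mk (q ≫ f) ≅ (Over.map f).obj ((Over.pullback f).obj (Over.mk z)) :=
    Over.isoMk h.isoPullback (by simp [Over.map, Over.pullback])
  have factor : (Over.homMk p h.w : Over.mk (q ≫ f) ⟶ Over.mk z) =
      e.hom ≫ (Over.mapPullbackAdj f).counit.app (Over.mk z) := by
    ext : 1
    simp [e]
  have : (restrictedRep T).map (Over.homMk p h.w : Over.mk (q ≫ f) ⟶ Over.mk z).op =
      (restrictToPullback f T).app (op (Over.mk z)) ≫ (restrictedRep T).map e.hom.op := by
    rw [factor, op_comp, Functor.map_comp]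
    rfl
  rw [this]
  exact ((cosimplicialQuasiIso 𝒜).cancel_right_of_respectsIso _ _).symm

end Fibers

end GZ

open GZ in
theorem stmt_16 {𝒜 : Type u} [Category.{v} 𝒜] [Abelian 𝒜] [HasLimits 𝒜] [AB4Star 𝒜]
    {X Y : SSet.{v}} (f : X ⟶ Y) (T : SimplexCat Y ⥤ 𝒜)
    (hlct : ∀ (k : SimplexCategory) (y : (SSet.stdSimplex.obj k : SSet.{v}) ⟶ Y)
      (q : ℕ),
      IsIso (HomologicalComplex.homologyMap
        ((AlgebraicTopology.alternatingCofaceMapComplex 𝒜).map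
          (pullNT (fiberP f y) (emapOp y ⋙ T)
            (emapOp (fiberYbar f y) ⋙ (emapOp f ⋙ T)) (κfib f y T))) q)) :
    ∀ q : ℕ, IsIso (HomologicalComplex.homologyMap
      ((AlgebraicTopology.alternatingCofaceMapComplex 𝒜).map
        (pullNT f T (emapOp f ⋙ T) (𝟙 (emapOp f ⋙ T)))) q) := by
  rw [← cosimplicialQuasiIso_iff_isIso_homologyMap]
  -- On both squares below, `restrictedRep T` gives the stated morphism `pullNT` definitionally.
  have whole_square : IsPullback f (𝟙 X) (𝟙 Y) f := .of_id_snd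
  refine (cosimplicialQuasiIso_restrictToPullback_app_iff f T whole_square).1 ?_
  refine cosimplicialQuasiIso_app_of_isRelInjective (restrictToPullback f T) (simplicesOver Y)
    (isRelInjective_restrictedCochains T) (isRelInjective_pullback_op_comp_restrictedCochains f T)
    (fun ⟨k, y⟩ => ?_) (op (Over.mk (𝟙 Y)))
  have fiber_quasiIso := (cosimplicialQuasiIso_iff_isIso_homologyMap _).2 (hlct k y)
  exact (cosimplicialQuasiIso_restrictToPullback_app_iff f T (isPullback_fiber f y)).2
    fiber_quasiIso
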